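/- arXiv:1706.00234 — 2 statements merged into one kernel-verified Lean document; each statement's English description precedes it below -/
import Mathlib

section
/- Let f₀, f₁, …, f_p : ℝⁿ → ℝ be nonconstant polynomial functions, let S := {x ∈ ℝⁿ : f₁(x) ≤ 0, …, f_p(x) ≤ 0} be nonempty, assume f₀ is bounded from below on S, and set f* := inf_{x ∈ S} f₀(x). Assume the Mangasarian–Fromovitz property at infinity ((MF)∞) holds for the problem inf_{x ∈ S} f₀(x). If f₀ does not attain its infimum f* on S, then either f* = 0 or there exist a nonempty set J ⊆ {1, …, n}, a vector q ∈ ℝⁿ with min_{j ∈ J} q_j < 0, a point x* ∈ ℝⁿ, and scalars λ*₀, λ*₁, …, λ*_p such that, setting Δ_i := Δ(q, Γ(f_i)) for i = 0, 1, …, p: (i) x*_j = 0 if and only if j ∉ J; (ii) f* = f_{0,Δ₀}(x*), Δ₀ ⊆ ℝ^J, and d(q, Γ(f₀)) = 0; (iii) λ*₀ ∇f_{0,Δ₀}(x*) + Σ_{i=1}^p λ*_i ∇f_{i,Δ_i}(x*) = 0; (iv) f_{i,Δ_i}(x*) ≤ 0 and λ*_i f_{i,Δ_i}(x*) = 0 for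 i = 1, …, p; (v) the numbers λ*_i, i = 0, 1, …, p, are nonnegative and not all zero. -/
open MvPolynomial Set Filter
open scoped Classical

noncomputable section

/-- The exponent vector of a monomial, viewed as a point of `ℝⁿ`. -/
def expVec {n : ℕ} (κ : Fin n →₀ ℕ) : Fin n → ℝ := fun j => (κ j : ℝ)

/-- The Newton polyhedron at infinity `Γ(f)`: the convex hull of the support of `f`. -/
def NewtonPolyhedron {n : ℕ} (f : MvPolynomial (Fin n) ℝ) : Set (Fin n → ℝ) :=
  convexHull ℝ (expVec '' (f.support : Set (Fin n →₀ ℕ)))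

/-- `d(q, Γ(f)) := min {⟨q, κ⟩ : κ ∈ Γ(f)}`. -/
def NewtonD {n : ℕ} (f : MvPolynomial (Fin n) ℝ) (q : Fin n → ℝ) : ℝ :=
  sInf ((fun κ : Fin n → ℝ => ∑ j, q j * κ j) '' NewtonPolyhedron f)

/-- `Δ(q, Γ(f)) := {κ ∈ Γ(f) : ⟨q, κ⟩ = d(q, Γ(f))}`. -/
def NewtonFace {n : ℕ} (f : MvPolynomial (Fin n) ℝ) (q : Fin n → ℝ) : Set (Fin n → ℝ) :=
  {κ ∈ NewtonPolyhedron f | ∑ j, q j * κ j = NewtonD f q}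

/-- For a set `Δ ⊆ ℝⁿ`, the polynomial `f_Δ := ∑_{κ ∈ Δ} a_κ x^κ`. -/
def facePoly {n : ℕ} (f : MvPolynomial (Fin n) ℝ) (Δ : Set (Fin n → ℝ)) :
    MvPolynomial (Fin n) ℝ :=
  ∑ κ ∈ f.support.filter (fun κ => expVec κ ∈ Δ), monomial κ (f.coeff κ)

/-- `ℝ^J := {x ∈ ℝⁿ : x_j = 0 for all j ∉ J}`. -/
def RJ {n : ℕ} (J : Set (Fin n)) : Set (Fin n → ℝ) := {x | ∀ j ∉ J, x j = 0}

/-- The restriction of `f` to `ℝ^J` is not constant. -/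
def NotConstOn {n : ℕ} (f : MvPolynomial (Fin n) ℝ) (J : Set (Fin n)) : Prop :=
  ∃ x ∈ RJ J, ∃ y ∈ RJ J, eval x f ≠ eval y f

/-- The Mangasarian–Fromovitz property at infinity for `inf {f 0 x : f i x ≤ 0, i = 1,…,p}`. -/
def MFinfty {n p : ℕ} (f : Fin (p + 1) → MvPolynomial (Fin n) ℝ) : Prop :=
  ∀ J : Set (Fin n), J.Nonempty → ∀ q x : Fin n → ℝ,
    NewtonD (f 0) q < 0 →
    (∀ i, NotConstOn (f i) J → NewtonFace (f i) q ⊆ RJ J) →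
    (∀ j, x j = 0 ↔ j ∉ J) →
    (∀ i, i ≠ 0 → eval x (facePoly (f i) (NewtonFace (f i) q)) ≤ 0) →
    ∃ v : Fin n → ℝ, v ≠ 0 ∧ ∀ i, NotConstOn (f i) J →
      eval x (facePoly (f i) (NewtonFace (f i) q)) = 0 →
      ∑ j, eval x (pderiv j (facePoly (f i) (NewtonFace (f i) q))) * v j < 0

/-- Kouchnirenko non-degeneracy at infinity. -/
def NondegenerateAtInfinity {n : ℕ} (f : MvPolynomial (Fin n) ℝ) : Prop :=
  ∀ q : Fin n → ℝ, NewtonD f q < 0 →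
    ∀ x : Fin n → ℝ, (∀ j, x j ≠ 0) →
      ¬ ∀ j, eval x (pderiv j (facePoly f (NewtonFace f q))) = 0

/-- A convenient polynomial. -/
def Convenient {n : ℕ} (f : MvPolynomial (Fin n) ℝ) : Prop :=
  ∀ j : Fin n, ∃ c : ℝ, 0 < c ∧ c • (Pi.single j 1 : Fin n → ℝ) ∈ NewtonPolyhedron f

/-- A bad face of `Γ(f)`. -/
def BadFace {n : ℕ} (f : MvPolynomial (Fin n) ℝ) (Δ : Set (Fin n → ℝ)) : Prop :=
  (∃ q : Fin n → ℝ, Δ = NewtonFace f q) ∧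
  (0 : Fin n → ℝ) ∈ affineSpan ℝ Δ ∧
  ∃ q : Fin n → ℝ, (∃ i j, q i * q j < 0) ∧
    {κ : Fin n → ℝ | ∑ j, q j * κ j = 0} ∩ NewtonPolyhedron f = Δ

/-- The set of critical values of `f`. -/
def K0 {n : ℕ} (f : MvPolynomial (Fin n) ℝ) : Set ℝ :=
  {c | ∃ x : Fin n → ℝ, (∀ j, eval x (pderiv j f) = 0) ∧ eval x f = c}

/-- `Σ∞(f)`: critical values of `f_Δ` over all bad faces `Δ`. -/
def SigmaInfty {n : ℕ} (f : MvPolynomial (Fin n) ℝ) : Set ℝ :=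
  {c | ∃ Δ : Set (Fin n → ℝ), BadFace f Δ ∧ ∃ x : Fin n → ℝ,
    (∀ j, eval x (pderiv j (facePoly f Δ)) = 0) ∧ eval x (facePoly f Δ) = c}

/-- `Σ∞'(f)`: critical values of `f_Δ` on `(ℝ ∖ {0})ⁿ` over all bad faces `Δ`. -/
def SigmaInfty' {n : ℕ} (f : MvPolynomial (Fin n) ℝ) : Set ℝ :=
  {c | ∃ Δ : Set (Fin n → ℝ), BadFace f Δ ∧ ∃ x : Fin n → ℝ, (∀ j, x j ≠ 0) ∧
    (∀ j, eval x (pderiv j (facePoly f Δ)) = 0) ∧ eval x (facePoly f Δ) = c}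

/-- The Euclidean norm on `Fin k → ℝ`. -/
def euclNorm {k : ℕ} (x : Fin k → ℝ) : ℝ := Real.sqrt (∑ j, (x j) ^ 2)

/-- Basic semialgebraic subsets of `ℝ^m`. -/
def BasicSA {m : ℕ} (A : Set (Fin m → ℝ)) : Prop :=
  ∃ (k l : ℕ) (g : Fin k → MvPolynomial (Fin m) ℝ) (h : Fin l → MvPolynomial (Fin m) ℝ),
    A = {x | (∀ i, eval x (g i) = 0) ∧ ∀ i, 0 < eval x (h i)}

/-- Semialgebraic subsets of `ℝ^m`: finite unions of basic semialgebraic sets. -/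
def IsSA {m : ℕ} (A : Set (Fin m → ℝ)) : Prop :=
  ∃ (N : ℕ) (B : Fin N → Set (Fin m → ℝ)), (∀ i, BasicSA (B i)) ∧ A = ⋃ i, B i

/-- A semialgebraic scalar function on a domain `D ⊆ ℝ` (graph is semialgebraic). -/
def IsSAFunOn (D : Set ℝ) (f : ℝ → ℝ) : Prop :=
  IsSA {z : Fin 2 → ℝ | z 0 ∈ D ∧ z 1 = f (z 0)}

/-- A semialgebraic curve `D → ℝⁿ` (graph is semialgebraic). -/
def IsSACurve {n : ℕ} (D : Set ℝ) (φ : ℝ → Fin n → ℝ) : Prop :=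
  IsSA {z : Fin (n + 1) → ℝ | z 0 ∈ D ∧ ∀ j : Fin n, z j.succ = φ (z 0) j}

/-- A semialgebraic map `ℝⁿ → ℝ^p` (graph is semialgebraic). -/
def IsSAMap {n p : ℕ} (F : (Fin n → ℝ) → (Fin p → ℝ)) : Prop :=
  IsSA {z : Fin (n + p) → ℝ |
    (fun i : Fin p => z (Fin.natAdd n i)) = F (fun j : Fin n => z (Fin.castAdd p j))}

/-!
On the points with a fixed sign vector `σ`, put `xⱼ = σⱼ e^{-yⱼ}` and minimize `f₀` plus a vanishing
multiple of `‖y‖` over the feasible set. The minimizers `y k` form a minimizing sequence of `f₀`,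
and they satisfy first-order conditions with vanishing error.

Along an ultrafilter each of the finitely many linear functionals `⟨·, κ⟩` and `⟨·, κ - κ'⟩`, with
`κ`, `κ'` exponents of the `fᵢ`, converges or diverges to `±∞` on `y k`. This behaviour is also that
of some ray `z + t q`, so no curve selection is needed: after division by the size of its dominant
monomials each `fᵢ` converges to its face polynomial for `q` at `x* = σ e^{-z}`, and so do the
logarithmic derivatives `∑ⱼ vⱼ xⱼ ∂fᵢ/∂xⱼ`. A common descent direction of the active face
polynomials would therefore be one for the penalized problem. When `d(q, Γ(f₀)) < 0` such a
direction is supplied by the Mangasarian–Fromovitz property, so `d(q, Γ(f₀)) ≥ 0`. If it is positive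
then `f₀` tends to `0`; if it is zero, the absence of descent directions gives the multipliers by
Gordan's theorem.
-/

open Topology

/-- `s` behaves along `l` like `t ↦ t * r + c` as `t → ∞`, the sign of `r` being all that is kept of
the slope: `s` tends to `c` if `r = 0`, to `+∞` if `0 < r` and to `-∞` if `r < 0`. -/
def GrowsLike {α : Type*} (l : Filter α) (s : α → ℝ) (r c : ℝ) : Prop :=
  (r = 0 ∧ Tendsto s l (𝓝 c)) ∨ (0 < r ∧ Tendsto s l atTop) ∨ (r < 0 ∧ Tendsto s l atBot)

namespace GrowsLike

variable {α : Type*} {l : Filter α} {s : α → ℝ} {r c : ℝ}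

theorem add_const (h : GrowsLike l s r c) (b : ℝ) : GrowsLike l (fun k => s k + b) r (c + b) :=
  Or.imp (And.imp_right fun hs => hs.add_const b)
    (Or.imp (And.imp_right (tendsto_atTop_add_const_right l b))
      (And.imp_right (tendsto_atBot_add_const_right l b))) h

theorem neg (h : GrowsLike l s r c) : GrowsLike l (fun k => -s k) (-r) (-c) := by
  rcases h with ⟨hr, hs⟩ | ⟨hr, hs⟩ | ⟨hr, hs⟩
  · exact Or.inl ⟨neg_eq_zero.2 hr, hs.neg⟩
  · exact Or.inr (Or.inr ⟨neg_neg_of_pos hr, tendsto_neg_atTop_atBot.comp hs⟩)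
  · exact Or.inr (Or.inl ⟨neg_pos_of_neg hr, tendsto_neg_atBot_atTop.comp hs⟩)

theorem tendsto_exp (h : GrowsLike l s r c) (hr : r ≤ 0) :
    Tendsto (fun k => Real.exp (s k)) l (𝓝 (if r = 0 then Real.exp c else 0)) := by
  rcases h with ⟨hr0, hs⟩ | ⟨hr0, -⟩ | ⟨hr0, hs⟩
  · rw [if_pos hr0]
    exact (Real.continuous_exp.tendsto c).comp hs
  · exact absurd hr0 hr.not_gt
  · rw [if_neg hr0.ne]
    exact Real.tendsto_exp_atBot.comp hs

theorem tendsto_exp_neg (h : GrowsLike l s r c) (hr : 0 ≤ r) :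
    Tendsto (fun k => Real.exp (-s k)) l (𝓝 (if r = 0 then Real.exp (-c) else 0)) := by
  simpa only [neg_eq_zero] using h.neg.tendsto_exp (neg_nonpos.2 hr)

end GrowsLike

theorem exists_tendsto_or_tendsto_atTop_or_atBot {α : Type*} (U : Ultrafilter α) (s : α → ℝ) :
    (∃ c, Tendsto s U (𝓝 c)) ∨ Tendsto s U atTop ∨ Tendsto s U atBot := by
  obtain ⟨c, -, hc⟩ := isCompact_univ.ultrafilter_le_nhds (U.map fun k => (s k : EReal)) (by simp)
  have hc' : Tendsto (fun k => (s k : EReal)) U (𝓝 c) := hc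
  induction c with
  | bot => exact Or.inr (Or.inr (EReal.tendsto_coe_nhds_bot_iff.1 hc'))
  | coe c => exact Or.inl ⟨c, EReal.tendsto_coe.1 hc'⟩
  | top => exact Or.inr (Or.inl (EReal.tendsto_coe_nhds_top_iff.1 hc'))

theorem exists_tendsto_lift {α ι E : Type*} [AddCommGroup E] [Module ℝ E] [Finite ι]
    {l : Filter α} [l.NeBot] (a : ι → E →ₗ[ℝ] ℝ) (y : α → E) {c : ι → ℝ}
    (hc : ∀ i, Tendsto (fun k => a i (y k)) l (𝓝 (c i))) :
    ∃ (u : α → E) (z : E), (∀ i, a i z = c i) ∧ (∀ i k, a i (u k) = a i (y k)) ∧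
      ∀ b : E →ₗ[ℝ] ℝ, Tendsto (fun k => b (u k)) l (𝓝 (b z)) := by
  obtain _ := Fintype.ofFinite ι
  let A : E →ₗ[ℝ] ι → ℝ := LinearMap.pi a
  have hlim : Tendsto (fun k => A (y k)) l (𝓝 c) := tendsto_pi_nhds.2 hc
  obtain ⟨z₀, hz₀⟩ : c ∈ LinearMap.range A :=
    (LinearMap.range A).closed_of_finiteDimensional.mem_of_tendsto hlim
      (Eventually.of_forall fun k => ⟨y k, rfl⟩)
  obtain ⟨R, hR⟩ := A.rangeRestrict.exists_rightInverse_of_surjective A.range_rangeRestrict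
  have hAR : ∀ x, A (R (A.rangeRestrict x)) = A x := fun x =>
    congrArg Subtype.val (LinearMap.congr_fun hR (A.rangeRestrict x))
  refine ⟨fun k => R (A.rangeRestrict (y k)), R (A.rangeRestrict z₀),
    fun i => congrFun ((hAR z₀).trans hz₀) i, fun i k => congrFun (hAR (y k)) i, fun b => ?_⟩
  have hcont : Continuous (b ∘ₗ R) := LinearMap.continuous_of_finiteDimensional _
  rw [← hz₀] at hlim
  exact (hcont.tendsto _).comp (tendsto_subtype_rng.2 hlim)

theorem exists_growsLike {α ι E : Type*} [AddCommGroup E] [Module ℝ E] [Finite ι]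
    (U : Ultrafilter α) (a : ι → E →ₗ[ℝ] ℝ) (y : α → E) :
    ∃ q z : E, ∀ i, GrowsLike U (fun k => a i (y k)) (a i q) (a i z) := by
  let B := {i // ∃ c, Tendsto (fun k => a i (y k)) U (𝓝 c)}
  choose c hc using fun i : B => i.2
  obtain ⟨u, z, hz, hu, hlim⟩ := exists_tendsto_lift (fun i : B => a i) y hc
  have hgrow : ∀ i, ∀ᶠ k in U, GrowsLike U (fun k => a i (y k)) (a i (y k - u k)) (a i z) := by
    intro i
    simp only [map_sub]
    rcases exists_tendsto_or_tendsto_atTop_or_atBot U fun k => a i (y k) with hi | hi | hi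
    · refine Eventually.of_forall fun k => Or.inl ⟨?_, ?_⟩
      · rw [hu ⟨i, hi⟩, sub_self]
      · rw [hz ⟨i, hi⟩]
        exact hc ⟨i, hi⟩
    · filter_upwards [(hi.atTop_add (hlim (a i)).neg).eventually_gt_atTop 0] with k hk
      exact Or.inr (Or.inl ⟨hk, hi⟩)
    · filter_upwards [(hi.atBot_add (hlim (a i)).neg).eventually_lt_atBot 0] with k hk
      exact Or.inr (Or.inr ⟨hk, hi⟩)
  obtain ⟨k, hk⟩ := (eventually_all.2 hgrow).exists
  exact ⟨y k - u k, z, hk⟩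

theorem convexHull_image_subset_image_stdSimplex {ι E : Type*} [Fintype ι] [AddCommGroup E]
    [Module ℝ E] (g : ι → E) (s : Set ι) :
    convexHull ℝ (g '' s) ⊆
      Fintype.linearCombination ℝ g '' (stdSimplex ℝ ι ∩ {w | ∀ i ∉ s, w i = 0}) := by
  refine convexHull_min ?_ (Convex.linear_image ?_ _)
  · rintro _ ⟨i, hi, rfl⟩
    have hsupp : ∀ j ∉ s, (Pi.single i 1 : ι → ℝ) j = 0 := fun j hj =>
      Pi.single_eq_of_ne (ne_of_mem_of_not_mem hi hj).symm 1
    exact ⟨Pi.single i 1, ⟨single_mem_stdSimplex ℝ i, hsupp⟩, by simp⟩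
  · refine (convex_stdSimplex ℝ ι).inter fun v hv w hw a b _ _ _ i hi => ?_
    simp [hv i hi, hw i hi]

theorem exists_forall_neg_or_exists_sum_smul_eq_zero {ι E : Type*} [Fintype ι] [AddCommGroup E]
    [Module ℝ E] [TopologicalSpace E] [IsTopologicalAddGroup E] [ContinuousSMul ℝ E]
    [LocallyConvexSpace ℝ E] [T2Space E] (g : ι → E) (s : Set ι) :
    (∃ φ : StrongDual ℝ E, ∀ i ∈ s, φ (g i) < 0) ∨
      ∃ w : ι → ℝ, 0 ≤ w ∧ w ≠ 0 ∧ (∀ i ∉ s, w i = 0) ∧ ∑ i, w i • g i = 0 := by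
  by_cases h0 : (0 : E) ∈ convexHull ℝ (g '' s)
  · obtain ⟨w, ⟨⟨hw0, hw1⟩, hws⟩, hw⟩ := convexHull_image_subset_image_stdSimplex g s h0
    exact Or.inr ⟨w, hw0, fun h => by simp [h] at hw1, hws, hw⟩
  · have hcl : IsClosed (convexHull ℝ (g '' s)) :=
      ((toFinite (g '' s)).isCompact_convexHull ℝ).isClosed
    obtain ⟨φ, b, h0b, hb⟩ :=
      geometric_hahn_banach_point_closed (convex_convexHull ℝ _) hcl h0
    refine Or.inl ⟨-φ, fun i hi => ?_⟩
    have hi' := hb (g i) (subset_convexHull ℝ _ (mem_image_of_mem g hi))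
    rw [map_zero] at h0b
    simpa using h0b.trans hi'

theorem exists_sum_smul_eq_zero_of_forall_dotProduct_nonneg {ι τ : Type*} [Fintype ι] [Fintype τ]
    (g : ι → τ → ℝ) (s : Set ι) (hg : ∀ v : τ → ℝ, ∃ i ∈ s, 0 ≤ g i ⬝ᵥ v) :
    ∃ w : ι → ℝ, 0 ≤ w ∧ w ≠ 0 ∧ (∀ i ∉ s, w i = 0) ∧ ∑ i, w i • g i = 0 := by
  refine (exists_forall_neg_or_exists_sum_smul_eq_zero g s).resolve_left ?_
  rintro ⟨φ, hφ⟩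
  obtain ⟨i, hi, hnonneg⟩ := hg fun j => φ (Pi.single j 1)
  have hrepr : φ (g i) = g i ⬝ᵥ fun j => φ (Pi.single j 1) := by
    conv_lhs => rw [pi_eq_sum_univ' (g i)]
    simp [dotProduct]
  exact (hφ i hi).not_ge (hnonneg.trans_eq hrepr.symm)

theorem exists_isGLB_of_isGLB_iUnion {ι α : Type*} [Finite ι] [Nonempty ι] [LinearOrder α]
    {A : ι → Set α} {m : α} (h : IsGLB (⋃ i, A i) m) : ∃ i, IsGLB (A i) m := by
  by_contra! hA
  have hm : ∀ i, m ∈ lowerBounds (A i) := fun i => lowerBounds_mono_set (subset_iUnion A i) h.1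
  have hlt : ∀ i, ∃ b ∈ lowerBounds (A i), m < b := fun i => by
    by_contra! hi
    exact hA i ⟨hm i, hi⟩
  choose b hbA hmb using hlt
  obtain ⟨i₀, hi₀⟩ := Finite.exists_min b
  refine (hmb i₀).not_ge (h.2 fun x hx => ?_)
  obtain ⟨i, hi⟩ := mem_iUnion.1 hx
  exact (hi₀ i).trans (hbA i hi)

section Penalty

variable {α E : Type*} [NormedAddCommGroup E] {l : Filter α} {S : Set E} {F : E → ℝ} {m : ℝ}
  {ε : α → ℝ} {y : α → E}

/-- The points `y k` minimize over `S` the function `F` penalized by a small multiple `ε k` of the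
norm, where `ε` tends to `0` along `l`. The penalty guarantees the existence of such minimizers even
when `F` does not attain its infimum. -/
structure ArePenalizedMinimizers (l : Filter α) (F : E → ℝ) (S : Set E) (ε : α → ℝ) (y : α → E) :
    Prop where
  nonneg : ∀ k, 0 ≤ ε k
  tendsto_zero : Tendsto ε l (𝓝 0)
  mem : ∀ k, y k ∈ S
  isMinOn : ∀ k, IsMinOn (fun x => F x + ε k * ‖x‖) S (y k)

theorem exists_isMinOn_add_mul_norm [ProperSpace E] (hS : IsClosed S) (hF : ContinuousOn F S)
    (hm : IsGLB (F '' S) m) {ε : ℝ} (hε : 0 < ε) :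
    ∃ y ∈ S, IsMinOn (fun x => F x + ε * ‖x‖) S y := by
  obtain ⟨y₀, hy₀⟩ := hm.nonempty.of_image
  have hcoercive : Tendsto (fun x : E => m + ε * ‖x‖) (cocompact E) atTop :=
    tendsto_atTop_add_const_left _ _ (tendsto_norm_cocompact_atTop.const_mul_atTop hε)
  refine ContinuousOn.exists_isMinOn' (hF.add (by fun_prop)) hS hy₀ ?_
  filter_upwards [(hcoercive.eventually_ge_atTop (F y₀ + ε * ‖y₀‖)).filter_mono inf_le_left,
    mem_inf_of_right (mem_principal_self S)] with x hx hxS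
  exact hx.trans (add_le_add_left (hm.1 (mem_image_of_mem F hxS)) _)

theorem exists_arePenalizedMinimizers [ProperSpace E] (hS : IsClosed S) (hF : ContinuousOn F S)
    (hm : IsGLB (F '' S) m) (hε : ∀ k, 0 < ε k) (hε0 : Tendsto ε l (𝓝 0)) :
    ∃ y, ArePenalizedMinimizers l F S ε y := by
  choose y hyS hmin using fun k => exists_isMinOn_add_mul_norm hS hF hm (hε k)
  exact ⟨y, fun k => (hε k).le, hε0, hyS, hmin⟩

theorem ArePenalizedMinimizers.tendsto (hy : ArePenalizedMinimizers l F S ε y)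
    (hm : IsGLB (F '' S) m) : Tendsto (fun k => F (y k)) l (𝓝 m) := by
  refine tendsto_order.2 ⟨fun b hb => ?_, fun b hb => ?_⟩
  · exact Eventually.of_forall fun k => hb.trans_le (hm.1 (mem_image_of_mem F (hy.mem k)))
  · obtain ⟨_, ⟨x, hx, rfl⟩, -, hxb⟩ := hm.exists_between hb
    have hlim : Tendsto (fun k => F x + ε k * ‖x‖) l (𝓝 (F x)) := by
      simpa using (hy.tendsto_zero.mul_const ‖x‖).const_add (F x)
    filter_upwards [hlim.eventually_lt_const hxb] with k hk
    have hpen : 0 ≤ ε k * ‖y k‖ := mul_nonneg (hy.nonneg k) (norm_nonneg _)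
    have hle : F (y k) + ε k * ‖y k‖ ≤ F x + ε k * ‖x‖ := hy.isMinOn k hx
    linarith

variable [NormedSpace ℝ E]

theorem eventually_lt_of_hasLineDerivAt_neg {F' : ℝ} {x v : E} (h : HasLineDerivAt ℝ F F' x v)
    (hF' : F' < 0) : ∀ᶠ t in 𝓝[>] (0 : ℝ), F (x + t • v) < F x := by
  filter_upwards [h.hasDerivWithinAt.limsup_slope_le' self_notMem_Ioi hF', self_mem_nhdsWithin]
    with t hslope (ht : 0 < t)
  rw [slope_def_field, sub_zero, div_neg_iff] at hslope
  simpa using (hslope.resolve_left fun h => h.2.not_gt ht).1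

theorem neg_mul_norm_le_of_isMinOn {F' ε : ℝ} (hε : 0 ≤ ε) {x v : E}
    (hmin : IsMinOn (fun u => F u + ε * ‖u‖) S x) (hF : HasLineDerivAt ℝ F F' x v)
    (hv : ∀ᶠ t in 𝓝[>] (0 : ℝ), x + t • v ∈ S) : -(ε * ‖v‖) ≤ F' := by
  have hslope : Tendsto (slope (fun t : ℝ => F (x + t • v)) 0) (𝓝[>] 0) (𝓝 F') :=
    (hasDerivWithinAt_iff_tendsto_slope' self_notMem_Ioi).1 hF.hasDerivWithinAt
  refine ge_of_tendsto hslope ?_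
  filter_upwards [hv, self_mem_nhdsWithin] with t hxt (ht : 0 < t)
  have hle : F x + ε * ‖x‖ ≤ F (x + t • v) + ε * ‖x + t • v‖ := hmin hxt
  have hnorm : ‖x + t • v‖ ≤ ‖x‖ + t * ‖v‖ :=
    (norm_add_le _ _).trans_eq (by rw [norm_smul, Real.norm_of_nonneg ht.le])
  rw [slope_def_field, sub_zero, zero_smul, add_zero, le_div_iff₀ ht]
  linarith [mul_le_mul_of_nonneg_left hnorm hε]

end Penalty

theorem mem_of_mem_convexHull_of_apply_eq {E : Type*} [AddCommGroup E] [Module ℝ E]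
    {s V : Set E} {φ : E →ₗ[ℝ] ℝ} {d : ℝ} (hV : Convex ℝ V) (hs : ∀ x ∈ s, d ≤ φ x)
    (hsV : ∀ x ∈ s, φ x = d → x ∈ V) {x : E} (hx : x ∈ convexHull ℝ s) (hxd : φ x = d) :
    x ∈ V := by
  have hconv : Convex ℝ {x | d ≤ φ x ∧ (φ x = d → x ∈ V)} := by
    refine convex_iff_forall_pos.2 fun x hx y hy a b ha hb hab => ?_
    have hd : d = a * d + b * d := by rw [← add_mul, hab, one_mul]
    have hax := mul_le_mul_of_nonneg_left hx.1 ha.le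
    have hby := mul_le_mul_of_nonneg_left hy.1 hb.le
    simp only [mem_ofPred_eq, map_add, map_smul, smul_eq_mul]
    refine ⟨by linarith, fun h => hV (hx.2 ?_) (hy.2 ?_) ha.le hb.le hab⟩
    · exact mul_left_cancel₀ ha.ne' (by linarith)
    · exact mul_left_cancel₀ hb.ne' (by linarith)
  exact (hconv.convexHull_subset_iff.2 (fun y hy => ⟨hs y hy, hsV y hy⟩) hx).2 hxd

section Newton

variable {n : ℕ} {f : MvPolynomial (Fin n) ℝ} {q : Fin n → ℝ} {κ : Fin n →₀ ℕ}

theorem expVec_mem_newtonPolyhedron (hκ : κ ∈ f.support) : expVec κ ∈ NewtonPolyhedron f :=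
  subset_convexHull ℝ _ (mem_image_of_mem expVec hκ)

theorem isLeast_newtonD (hf : f.support.Nonempty) :
    IsLeast ((fun κ => q ⬝ᵥ expVec κ) '' f.support) (NewtonD f q) := by
  obtain ⟨κ₀, hκ₀, hmin⟩ := Finset.exists_min_image f.support (fun κ => q ⬝ᵥ expVec κ) hf
  have hhull : NewtonPolyhedron f ⊆ {x | q ⬝ᵥ expVec κ₀ ≤ q ⬝ᵥ x} := by
    refine convexHull_min ?_ (convex_halfSpace_ge (dotProductBilin ℝ ℝ q).isLinear _)
    rintro _ ⟨κ, hκ, rfl⟩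
    exact hmin κ hκ
  have hD : NewtonD f q = q ⬝ᵥ expVec κ₀ := by
    refine IsLeast.csInf_eq ⟨⟨_, expVec_mem_newtonPolyhedron hκ₀, rfl⟩, ?_⟩
    rintro _ ⟨x, hx, rfl⟩
    exact hhull hx
  rw [hD]
  exact ⟨⟨κ₀, hκ₀, rfl⟩, forall_mem_image.2 hmin⟩

theorem newtonD_le (hκ : κ ∈ f.support) : NewtonD f q ≤ q ⬝ᵥ expVec κ :=
  (isLeast_newtonD (f := f) ⟨κ, hκ⟩).2 (mem_image_of_mem _ hκ)

theorem expVec_mem_newtonFace_iff (hκ : κ ∈ f.support) :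
    expVec κ ∈ NewtonFace f q ↔ q ⬝ᵥ expVec κ = NewtonD f q :=
  and_iff_right (expVec_mem_newtonPolyhedron hκ)

theorem newtonFace_subset_of_convex {V : Set (Fin n → ℝ)} (hV : Convex ℝ V)
    (h : ∀ κ ∈ f.support, expVec κ ∈ NewtonFace f q → expVec κ ∈ V) : NewtonFace f q ⊆ V := by
  rintro x ⟨hx, hxd⟩
  refine mem_of_mem_convexHull_of_apply_eq (φ := dotProductBilin ℝ ℝ q) hV ?_ ?_ hx hxd
  · rintro _ ⟨κ, hκ, rfl⟩
    exact newtonD_le hκ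
  · rintro _ ⟨κ, hκ, rfl⟩ hd
    exact h κ hκ ((expVec_mem_newtonFace_iff hκ).2 hd)

theorem coeff_facePoly (f : MvPolynomial (Fin n) ℝ) (Δ : Set (Fin n → ℝ)) (κ : Fin n →₀ ℕ) :
    coeff κ (facePoly f Δ) = if expVec κ ∈ Δ then coeff κ f else 0 := by
  simp +contextual [facePoly, coeff_sum, coeff_monomial, ite_and]

end Newton

section CoordinateSubspace

variable {n : ℕ} {J : Set (Fin n)} {f : MvPolynomial (Fin n) ℝ} {κ : Fin n →₀ ℕ}

theorem convex_RJ (J : Set (Fin n)) : Convex ℝ (RJ J) := fun x hx y hy a b _ _ _ j hj => by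
  simp [hx j hj, hy j hj]

theorem sub_mem_RJ {x y : Fin n → ℝ} (hx : x ∈ RJ J) (hy : y ∈ RJ J) : x - y ∈ RJ J :=
  fun j hj => by simp [hx j hj, hy j hj]

theorem dotProduct_eq_of_eqOn {q q' x : Fin n → ℝ} (hq : EqOn q q' J) (hx : x ∈ RJ J) :
    q ⬝ᵥ x = q' ⬝ᵥ x := by
  refine Finset.sum_congr rfl fun j _ => ?_
  by_cases hj : j ∈ J
  · rw [hq hj]
  · rw [hx j hj, mul_zero, mul_zero]

theorem expVec_mem_RJ_iff : expVec κ ∈ RJ J ↔ ∀ j ∉ J, κ j = 0 := by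
  simp [RJ, expVec]

theorem eval_monomial_eq_zero {x : Fin n → ℝ} (hx : x ∈ RJ J) (hκ : expVec κ ∉ RJ J) (a : ℝ) :
    eval x (monomial κ a) = 0 := by
  simp only [expVec_mem_RJ_iff, not_forall] at hκ
  obtain ⟨j, hj, hκj⟩ := hκ
  rw [eval_monomial, Finsupp.prod_pow,
    Finset.prod_eq_zero (Finset.mem_univ j) (by rw [hx j hj, zero_pow hκj]), mul_zero]

/-- Some monomial of `f` involves only the variables in `J`; equivalently, `f` does not vanish
identically on `ℝ^J`. -/
def HasExponentIn (f : MvPolynomial (Fin n) ℝ) (J : Set (Fin n)) : Prop :=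
  ∃ κ ∈ f.support, expVec κ ∈ RJ J

theorem eval_eq_zero_of_not_hasExponentIn (hf : ¬ HasExponentIn f J) {x : Fin n → ℝ}
    (hx : x ∈ RJ J) : eval x f = 0 := by
  rw [f.as_sum, map_sum]
  exact Finset.sum_eq_zero fun κ hκ => eval_monomial_eq_zero hx (fun h => hf ⟨κ, hκ, h⟩) _

theorem NotConstOn.hasExponentIn (hf : NotConstOn f J) : HasExponentIn f J := by
  by_contra h
  obtain ⟨x, hx, y, hy, hne⟩ := hf
  exact hne ((eval_eq_zero_of_not_hasExponentIn h hx).trans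
    (eval_eq_zero_of_not_hasExponentIn h hy).symm)

theorem NotConstOn.nonempty (hf : NotConstOn f J) : J.Nonempty := by
  obtain ⟨x, hx, y, hy, hne⟩ := hf
  rw [nonempty_iff_ne_empty]
  rintro rfl
  exact hne (congrArg (fun u => eval u f) (funext fun j => by rw [hx j id, hy j id]))

theorem HasExponentIn.of_facePoly {Δ : Set (Fin n → ℝ)} (h : HasExponentIn (facePoly f Δ) J) :
    HasExponentIn f J := by
  obtain ⟨κ, hκ, hκJ⟩ := h
  rw [mem_support_iff, coeff_facePoly, ne_eq, ite_eq_right_iff, Classical.not_imp] at hκ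
  exact ⟨κ, mem_support_iff.2 hκ.2, hκJ⟩

theorem pderiv_facePoly_eq_zero {Δ : Set (Fin n → ℝ)} (hΔ : Δ ⊆ RJ J) {j : Fin n} (hj : j ∉ J) :
    pderiv j (facePoly f Δ) = 0 := by
  rw [facePoly, map_sum]
  refine Finset.sum_eq_zero fun κ hκ => ?_
  have hκj : κ j = 0 := expVec_mem_RJ_iff.1 (hΔ (Finset.mem_filter.1 hκ).2) j hj
  rw [pderiv_monomial, hκj, Nat.cast_zero, mul_zero, monomial_zero]

/-- The weights of the variables outside `J` are made so large that no monomial involving one of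
them can lie on the face. -/
theorem exists_eqOn_forall_newtonFace_subset_RJ {ι : Type*} [Finite ι]
    (f : ι → MvPolynomial (Fin n) ℝ) (q : Fin n → ℝ) (J : Set (Fin n)) :
    ∃ q', EqOn q' q J ∧ ∀ i, HasExponentIn (f i) J → NewtonFace (f i) q' ⊆ RJ J := by
  let q' : ℝ → Fin n → ℝ := fun M => q + M • Jᶜ.indicator 1
  have hq' : ∀ M, EqOn (q' M) q J := fun M j hj => by simp [q', hj]
  have hlarge : ∀ i, ∀ᶠ M in atTop, ∀ κ ∈ (f i).support, ∀ κ' ∈ (f i).support,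
      expVec κ ∈ RJ J → expVec κ' ∉ RJ J → q' M ⬝ᵥ expVec κ < q' M ⬝ᵥ expVec κ' := by
    simp only [Finset.eventually_all, eventually_imp_distrib_left]
    intro i κ _ κ' _ hκ hκ'
    have hpos : 0 < (Jᶜ.indicator 1 : Fin n → ℝ) ⬝ᵥ expVec κ' := by
      rw [expVec_mem_RJ_iff] at hκ'
      push Not at hκ'
      obtain ⟨j, hj, hκ'j⟩ := hκ'
      have hnonneg : ∀ l, 0 ≤ (Jᶜ.indicator 1 : Fin n → ℝ) l * expVec κ' l := fun l =>
        mul_nonneg (indicator_nonneg (fun _ _ => zero_le_one) l) (Nat.cast_nonneg _)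
      refine Finset.sum_pos' (fun l _ => hnonneg l) ⟨j, Finset.mem_univ j, ?_⟩
      simpa [hj, expVec, Nat.pos_iff_ne_zero] using hκ'j
    filter_upwards [(tendsto_atTop_add_const_left _ (q ⬝ᵥ expVec κ')
      (tendsto_id.atTop_mul_const hpos)).eventually_gt_atTop (q ⬝ᵥ expVec κ)] with M hM
    rw [dotProduct_eq_of_eqOn (hq' M) hκ, add_dotProduct, smul_dotProduct]
    exact hM
  obtain ⟨M, hM⟩ := (eventually_all.2 hlarge).exists
  refine ⟨q' M, hq' M, fun i hi => newtonFace_subset_of_convex (convex_RJ J) fun κ' hκ' hface => ?_⟩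
  by_contra hκ'J
  obtain ⟨κ, hκ, hκJ⟩ := hi
  refine (hM i κ hκ κ' hκ' hκJ hκ'J).not_ge ?_
  rw [(expVec_mem_newtonFace_iff hκ').1 hface]
  exact newtonD_le hκ

end CoordinateSubspace

section WeightedEuler

variable {τ R : Type*} [Fintype τ] [CommSemiring R]

/-- The weighted Euler operator `∑ j, vⱼ xⱼ ∂/∂xⱼ`, which multiplies the monomial `x^κ` by
`⟨v, κ⟩`. -/
def weightedEuler (v : τ → R) (f : MvPolynomial τ R) : MvPolynomial τ R :=
  ∑ j, v j • (X j * pderiv j f)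

theorem coeff_weightedEuler (v : τ → R) (f : MvPolynomial τ R) (κ : τ →₀ ℕ) :
    coeff κ (weightedEuler v f) = (∑ j, v j * κ j) * coeff κ f := by
  induction f using MvPolynomial.induction_on' with
  | add p q hp hq =>
    simp only [weightedEuler, map_add, mul_add, smul_add, Finset.sum_add_distrib, coeff_add] at *
    rw [hp, hq]
  | monomial μ a =>
    simp only [weightedEuler, X_mul_pderiv_monomial, coeff_sum, coeff_smul, coeff_monomial]
    split_ifs with h
    · simp [h, Finset.sum_mul, mul_assoc]
    · simp

theorem support_weightedEuler_subset (v : τ → R) (f : MvPolynomial τ R) :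
    (weightedEuler v f).support ⊆ f.support := fun κ hκ => by
  rw [mem_support_iff, coeff_weightedEuler] at hκ
  exact mem_support_iff.2 (right_ne_zero_of_mul hκ)

theorem eval_weightedEuler (v x : τ → R) (f : MvPolynomial τ R) :
    eval x (weightedEuler v f) = ∑ j, v j * (x j * eval x (pderiv j f)) := by
  simp [weightedEuler, smul_eval]

theorem facePoly_weightedEuler {n : ℕ} (v : Fin n → ℝ) (f : MvPolynomial (Fin n) ℝ)
    (Δ : Set (Fin n → ℝ)) : facePoly (weightedEuler v f) Δ = weightedEuler v (facePoly f Δ) := by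
  ext κ
  simp only [coeff_facePoly, coeff_weightedEuler, mul_ite, mul_zero]

end WeightedEuler

section SignedExp

/-- The point with coordinates `σⱼ e^{-yⱼ}`. For a sign vector `σ` this parametrizes, by
`yⱼ = -log |xⱼ|`, the points `x` with that sign vector. -/
def signedExp {τ : Type*} (σ y : τ → ℝ) : τ → ℝ := fun j => σ j * Real.exp (-y j)

theorem continuous_signedExp {τ : Type*} (σ : τ → ℝ) : Continuous (signedExp σ) := by
  unfold signedExp
  fun_prop

theorem signedExp_eq_zero_iff {τ : Type*} {σ y : τ → ℝ} {j : τ} :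
    signedExp σ y j = 0 ↔ j ∉ Function.support σ := by
  simp [signedExp]

theorem signedExp_mem_RJ {n : ℕ} (σ y : Fin n → ℝ) :
    signedExp σ y ∈ RJ (Function.support σ) := fun _ hj =>
  signedExp_eq_zero_iff.2 hj

theorem signedExp_sign_neg_log_abs {τ : Type*} (x : τ → ℝ) :
    signedExp (fun j => (SignType.sign (x j) : ℝ)) (fun j => -Real.log |x j|) = x := by
  funext j
  by_cases hj : x j = 0
  · simp [signedExp, hj]
  · rw [signedExp, neg_neg, Real.exp_log (abs_pos.2 hj), sign_mul_abs]

theorem exists_isGLB_image_preimage_signedExp {τ α : Type*} [Finite τ] [LinearOrder α]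
    {S : Set (τ → ℝ)} {F : (τ → ℝ) → α} {m : α} (h : IsGLB (F '' S) m) :
    ∃ σ : τ → ℝ, IsGLB ((fun y => F (signedExp σ y)) '' (signedExp σ ⁻¹' S)) m := by
  have hcover : F '' S = ⋃ s : τ → SignType,
      (fun y => F (signedExp (fun j => s j) y)) '' (signedExp (fun j => s j) ⁻¹' S) := by
    refine Subset.antisymm ?_ (iUnion_subset fun s => ?_)
    · rintro _ ⟨x, hx, rfl⟩
      rw [← signedExp_sign_neg_log_abs x] at hx ⊢
      exact mem_iUnion.2 ⟨fun j => SignType.sign (x j), _, hx, rfl⟩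
    · rintro _ ⟨y, hy, rfl⟩
      exact mem_image_of_mem F hy
  rw [hcover] at h
  obtain ⟨s, hs⟩ := exists_isGLB_of_isGLB_iUnion h
  exact ⟨_, hs⟩

theorem hasLineDerivAt_eval_signedExp {τ : Type*} [Fintype τ] (σ y v : τ → ℝ)
    (f : MvPolynomial τ ℝ) :
    HasLineDerivAt ℝ (fun u => eval (signedExp σ u) f)
      (eval (signedExp σ y) (weightedEuler v f)) y (-v) := by
  rw [eval_weightedEuler]
  unfold HasLineDerivAt
  induction f using MvPolynomial.induction_on with
  | C a => simpa using hasDerivAt_const (0 : ℝ) a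
  | add p q hp hq => simpa [mul_add, Finset.sum_add_distrib] using hp.fun_add hq
  | mul_X p j hp =>
    have hj : HasDerivAt (fun t : ℝ => signedExp σ (y + t • -v) j) (v j * signedExp σ y j) 0 := by
      have hlin : HasDerivAt (fun t : ℝ => -(y + t • -v) j) (v j) 0 := by
        simpa using ((hasDerivAt_id (0 : ℝ)).mul_const (v j)).sub_const (y j)
      simpa [signedExp, mul_comm, mul_left_comm] using hlin.exp.const_mul (σ j)
    simp only [map_mul, eval_X]
    refine (hp.fun_mul hj).congr_deriv ?_
    simp only [Derivation.leibniz, pderiv_X, smul_eq_mul, map_add, map_mul, eval_X, mul_add,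
      Finset.sum_add_distrib, Finset.sum_mul, zero_smul, add_zero]
    rw [add_comm]
    congr 1
    · simp [Pi.single_apply, apply_ite, mul_comm, mul_assoc]
    · exact Finset.sum_congr rfl fun l _ => by ring

end SignedExp

section LeadingTerm

variable {n : ℕ} {α : Type*} {l : Filter α} {f : MvPolynomial (Fin n) ℝ} {σ q z : Fin n → ℝ}
  {y : α → Fin n → ℝ}

theorem eval_signedExp (σ y : Fin n → ℝ) (f : MvPolynomial (Fin n) ℝ) :
    eval (signedExp σ y) f =
      ∑ κ ∈ f.support, Real.exp (-(y ⬝ᵥ expVec κ)) * eval σ (monomial κ (coeff κ f)) := by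
  conv_lhs => rw [f.as_sum, map_sum]
  refine Finset.sum_congr rfl fun κ _ => ?_
  have hexp : Real.exp (-(y ⬝ᵥ expVec κ)) = ∏ j, Real.exp (-y j) ^ κ j := by
    rw [← neg_dotProduct, dotProduct, Real.exp_sum]
    refine Finset.prod_congr rfl fun j _ => ?_
    rw [← Real.exp_nat_mul, mul_comm, Pi.neg_apply, expVec]
  rw [eval_monomial, eval_monomial, Finsupp.prod_pow, Finsupp.prod_pow, hexp]
  simp only [signedExp, mul_pow, Finset.prod_mul_distrib]
  ring

theorem eval_signedExp_facePoly (σ y : Fin n → ℝ) (f : MvPolynomial (Fin n) ℝ)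
    (Δ : Set (Fin n → ℝ)) :
    eval (signedExp σ y) (facePoly f Δ) = ∑ κ ∈ f.support,
      (if expVec κ ∈ Δ then Real.exp (-(y ⬝ᵥ expVec κ)) else 0) *
        eval σ (monomial κ (coeff κ f)) := by
  have hsub : (facePoly f Δ).support ⊆ f.support := fun κ hκ => by
    rw [mem_support_iff, coeff_facePoly, ne_eq, ite_eq_right_iff, Classical.not_imp] at hκ
    exact mem_support_iff.2 hκ.2
  rw [eval_signedExp, Finset.sum_subset hsub fun κ _ hκ => by simp [notMem_support_iff.1 hκ]]
  refine Finset.sum_congr rfl fun κ _ => ?_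
  rw [coeff_facePoly]
  split_ifs <;> simp

/-- The face polynomial `f_Δ` for `Δ = Δ(q, Γ(f))`. -/
abbrev initialForm (f : MvPolynomial (Fin n) ℝ) (q : Fin n → ℝ) : MvPolynomial (Fin n) ℝ :=
  facePoly f (NewtonFace f q)

/-- As far as the monomials of `f` can tell, `y` moves to infinity along `l` like the ray
`t ↦ z + t q`, so that `signedExp σ (y k)` moves like the monomial curve with exponents `q` and
leading coefficients `signedExp σ z`. The coordinates of `q` outside the support of `σ`, where
`signedExp σ (y k)` vanishes, only have to keep the face of `f` in the coordinate subspace. -/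
structure HasLeadingTerm (l : Filter α) (f : MvPolynomial (Fin n) ℝ) (σ : Fin n → ℝ)
    (y : α → Fin n → ℝ) (q z : Fin n → ℝ) : Prop where
  face_subset : HasExponentIn f (Function.support σ) → NewtonFace f q ⊆ RJ (Function.support σ)
  exponent : ∀ κ ∈ f.support, expVec κ ∈ RJ (Function.support σ) →
    GrowsLike l (fun k => y k ⬝ᵥ expVec κ) (q ⬝ᵥ expVec κ) (z ⬝ᵥ expVec κ)
  exponent_sub : ∀ κ ∈ f.support, ∀ κ' ∈ f.support, expVec κ ∈ RJ (Function.support σ) →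
    expVec κ' ∈ RJ (Function.support σ) → GrowsLike l (fun k => y k ⬝ᵥ (expVec κ - expVec κ'))
      (q ⬝ᵥ (expVec κ - expVec κ')) (z ⬝ᵥ (expVec κ - expVec κ'))

theorem exists_growsLike_dotProduct (U : Ultrafilter α) (y : α → Fin n → ℝ)
    {A : Set (Fin n → ℝ)} (hA : A.Finite) :
    ∃ q z : Fin n → ℝ, ∀ x ∈ A, GrowsLike U (fun k => y k ⬝ᵥ x) (q ⬝ᵥ x) (z ⬝ᵥ x) := by
  have : Finite A := hA
  obtain ⟨q, z, h⟩ := exists_growsLike U (fun x : A => (dotProductBilin ℝ ℝ).flip x.1) y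
  exact ⟨q, z, fun x hx => h ⟨x, hx⟩⟩

theorem exists_hasLeadingTerm {ι : Type*} [Finite ι] (U : Ultrafilter α)
    (f : ι → MvPolynomial (Fin n) ℝ) (σ : Fin n → ℝ) (y : α → Fin n → ℝ) :
    ∃ q z : Fin n → ℝ,
      (∀ j ∈ Function.support σ, GrowsLike U (fun k => y k j) (q j) (z j)) ∧
        ∀ i, HasLeadingTerm U (f i) σ y q z := by
  let A : Set (Fin n → ℝ) := ⋃ i, expVec '' (f i).support
  have hA : A.Finite := finite_iUnion fun i => (f i).support.finite_toSet.image _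
  have hexp : ∀ {i κ}, κ ∈ (f i).support → expVec κ ∈ A := fun {i _} hκ =>
    mem_iUnion_of_mem i (mem_image_of_mem expVec hκ)
  obtain ⟨q, z, h⟩ := exists_growsLike_dotProduct U y
    (((finite_range fun j => (Pi.single j 1 : Fin n → ℝ)).union hA).union (hA.image2 (· - ·) hA))
  obtain ⟨q', hq', hface⟩ := exists_eqOn_forall_newtonFace_subset_RJ f q (Function.support σ)
  refine ⟨q', z, fun j hj => ?_, fun i => ⟨hface i, fun κ hκ hκJ => ?_,
    fun κ hκ κ' hκ' hκJ hκ'J => ?_⟩⟩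
  · simpa [hq' hj] using h (Pi.single j 1) (Or.inl (Or.inl (mem_range_self j)))
  · rw [dotProduct_eq_of_eqOn hq' hκJ]
    exact h _ (Or.inl (Or.inr (hexp hκ)))
  · rw [dotProduct_eq_of_eqOn hq' (sub_mem_RJ hκJ hκ'J)]
    exact h _ (Or.inr (mem_image2_of_mem (hexp hκ) (hexp hκ')))

theorem exists_tendsto_signedExp
    (hy : ∀ j ∈ Function.support σ, GrowsLike l (fun k => y k j) (q j) (z j))
    (hq : ∀ j ∈ Function.support σ, 0 ≤ q j) :
    ∃ x, Tendsto (fun k => signedExp σ (y k)) l (𝓝 x) := by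
  have hcoord : ∀ j, ∃ c, Tendsto (fun k => signedExp σ (y k) j) l (𝓝 c) := by
    intro j
    by_cases hj : j ∈ Function.support σ
    · exact ⟨_, ((hy j hj).tendsto_exp_neg (hq j hj)).const_mul (σ j)⟩
    · simp only [signedExp_eq_zero_iff.2 hj]
      exact ⟨0, tendsto_const_nhds⟩
  choose x hx using hcoord
  exact ⟨x, tendsto_pi_nhds.2 hx⟩

theorem exists_neg_of_tendsto_of_forall_ne [l.NeBot] {S : Set (Fin n → ℝ)} (hS : IsClosed S)
    {F : (Fin n → ℝ) → ℝ} (hF : Continuous F) {m : ℝ} (hmem : ∀ k, signedExp σ (y k) ∈ S)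
    (hlim : Tendsto (fun k => F (signedExp σ (y k))) l (𝓝 m)) (hne : ∀ x ∈ S, F x ≠ m)
    (hy : ∀ j ∈ Function.support σ, GrowsLike l (fun k => y k j) (q j) (z j)) :
    ∃ j ∈ Function.support σ, q j < 0 := by
  by_contra! hq
  obtain ⟨x, hx⟩ := exists_tendsto_signedExp hy hq
  refine hne x (hS.mem_of_tendsto hx (Eventually.of_forall hmem)) ?_
  exact tendsto_nhds_unique ((hF.tendsto x).comp hx) hlim

theorem notConstOn_of_tendsto_of_forall_ne [l.NeBot] {S : Set (Fin n → ℝ)} {m : ℝ}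
    (hmem : ∀ k, signedExp σ (y k) ∈ S)
    (hlim : Tendsto (fun k => eval (signedExp σ (y k)) f) l (𝓝 m))
    (hne : ∀ x ∈ S, eval x f ≠ m) : NotConstOn f (Function.support σ) := by
  by_contra hconst
  simp only [NotConstOn, not_exists, not_and, not_not] at hconst
  obtain ⟨k₀⟩ := l.nonempty_of_neBot
  have hk₀ : ∀ k, eval (signedExp σ (y k)) f = eval (signedExp σ (y k₀)) f := fun k =>
    hconst _ (signedExp_mem_RJ σ _) _ (signedExp_mem_RJ σ _)
  simp only [hk₀] at hlim
  exact hne _ (hmem k₀) (tendsto_nhds_unique tendsto_const_nhds hlim)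

namespace HasLeadingTerm

/-- The rescaling is by `e^{⟨y k - z, κ₀⟩}` for a vertex `κ₀` of the face. -/
theorem exists_rescaling (h : HasLeadingTerm l f σ y q z)
    (hf : HasExponentIn f (Function.support σ)) :
    ∃ s : α → ℝ, GrowsLike l s (NewtonD f q) 0 ∧ ∀ g : MvPolynomial (Fin n) ℝ,
      g.support ⊆ f.support → Tendsto (fun k => Real.exp (s k) * eval (signedExp σ (y k)) g) l
        (𝓝 (eval (signedExp σ z) (facePoly g (NewtonFace f q)))) := by
  obtain ⟨κ₀, hκ₀, hd⟩ := (isLeast_newtonD (q := q) (hf.imp fun _ => And.left)).1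
  simp only at hd
  have hκ₀J := h.face_subset hf ((expVec_mem_newtonFace_iff hκ₀).2 hd)
  refine ⟨fun k => y k ⬝ᵥ expVec κ₀ + -(z ⬝ᵥ expVec κ₀), ?_, fun g hg => ?_⟩
  · simpa [hd] using (h.exponent κ₀ hκ₀ hκ₀J).add_const (-(z ⬝ᵥ expVec κ₀))
  simp only [eval_signedExp_facePoly, eval_signedExp σ _ g, Finset.mul_sum]
  refine tendsto_finsetSum _ fun κ hκ => ?_
  by_cases hκJ : expVec κ ∈ RJ (Function.support σ)
  · have hgrow := (h.exponent_sub κ (hg hκ) κ₀ hκ₀ hκJ hκ₀J).add_const (z ⬝ᵥ expVec κ₀)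
    simp only [dotProduct_sub, sub_add_cancel, hd] at hgrow
    have hterm := hgrow.tendsto_exp_neg (sub_nonneg.2 (newtonD_le (hg hκ)))
    simp only [sub_eq_zero, ← expVec_mem_newtonFace_iff (hg hκ)] at hterm
    refine (hterm.mul_const _).congr fun k => ?_
    rw [← mul_assoc, ← Real.exp_add]
    congr 2
    ring
  · have hσ : eval σ (monomial κ (coeff κ g)) = 0 :=
      eval_monomial_eq_zero (fun j => Function.notMem_support.1) hκJ _
    simp only [hσ, mul_zero, tendsto_const_nhds]

theorem eval_initialForm_nonpos [l.NeBot] (h : HasLeadingTerm l f σ y q z)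
    (hle : ∀ k, eval (signedExp σ (y k)) f ≤ 0) :
    eval (signedExp σ z) (initialForm f q) ≤ 0 := by
  by_cases hf : HasExponentIn f (Function.support σ)
  · obtain ⟨s, -, hs⟩ := h.exists_rescaling hf
    exact le_of_tendsto' (hs f subset_rfl) fun k =>
      mul_nonpos_of_nonneg_of_nonpos (Real.exp_pos _).le (hle k)
  · exact (eval_eq_zero_of_not_hasExponentIn (mt HasExponentIn.of_facePoly hf)
      (signedExp_mem_RJ σ z)).le

theorem limit_eq_zero_of_newtonD_pos [l.NeBot] (h : HasLeadingTerm l f σ y q z)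
    (hf : HasExponentIn f (Function.support σ)) (hd : 0 < NewtonD f q) {m : ℝ}
    (hlim : Tendsto (fun k => eval (signedExp σ (y k)) f) l (𝓝 m)) : m = 0 := by
  obtain ⟨s, hs, hconv⟩ := h.exists_rescaling hf
  have hlim' := (hs.tendsto_exp_neg hd.le).mul (hconv f subset_rfl)
  simp only [← mul_assoc, ← Real.exp_add, neg_add_cancel, Real.exp_zero, one_mul, if_neg hd.ne',
    zero_mul] at hlim'
  exact tendsto_nhds_unique hlim hlim'

theorem eval_initialForm_eq [l.NeBot] (h : HasLeadingTerm l f σ y q z)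
    (hf : HasExponentIn f (Function.support σ)) (hd : NewtonD f q ≤ 0) {m : ℝ}
    (hlim : Tendsto (fun k => eval (signedExp σ (y k)) f) l (𝓝 m)) :
    eval (signedExp σ z) (initialForm f q) = if NewtonD f q = 0 then m else 0 := by
  obtain ⟨s, hs, hconv⟩ := h.exists_rescaling hf
  rw [tendsto_nhds_unique (hconv f subset_rfl) ((hs.tendsto_exp hd).mul hlim), Real.exp_zero,
    ite_mul, one_mul, zero_mul]

theorem eventually_eval_nonpos [l.NeBot] (h : HasLeadingTerm l f σ y q z) {v : Fin n → ℝ}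
    (hle : ∀ k, eval (signedExp σ (y k)) f ≤ 0)
    (hv : NotConstOn f (Function.support σ) → eval (signedExp σ z) (initialForm f q) = 0 →
      eval (signedExp σ z) (weightedEuler v (initialForm f q)) < 0) :
    ∀ᶠ k in l, ∀ᶠ t in 𝓝[>] (0 : ℝ), eval (signedExp σ (y k + t • -v)) f ≤ 0 := by
  by_cases hf : NotConstOn f (Function.support σ)
  swap
  · simp only [NotConstOn, not_exists, not_and, not_not] at hf
    refine Eventually.of_forall fun k => Eventually.of_forall fun t => ?_
    exact (hf _ (signedExp_mem_RJ σ _) _ (signedExp_mem_RJ σ _)).trans_le (hle k)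
  obtain ⟨s, -, hs⟩ := h.exists_rescaling hf.hasExponentIn
  rcases (h.eval_initialForm_nonpos hle).lt_or_eq with hneg | hzero
  · filter_upwards [(hs f subset_rfl).eventually_lt_const hneg] with k hk
    have hcont : Continuous fun t : ℝ => eval (signedExp σ (y k + t • -v)) f :=
      (MvPolynomial.continuous_eval f).comp ((continuous_signedExp σ).comp (by fun_prop))
    refine (hcont.tendsto' 0 _ (by rw [zero_smul, add_zero])).mono_left nhdsWithin_le_nhds
      |>.eventually_le_const (neg_of_mul_neg_right hk (Real.exp_pos _).le)
  · have hlim := hs _ (support_weightedEuler_subset v f)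
    rw [facePoly_weightedEuler] at hlim
    filter_upwards [hlim.eventually_lt_const (hv hf hzero)] with k hk
    have hderiv := hasLineDerivAt_eval_signedExp σ (y k) v f
    filter_upwards [eventually_lt_of_hasLineDerivAt_neg hderiv
      (neg_of_mul_neg_right hk (Real.exp_pos _).le)] with t ht
    exact ht.le.trans (hle k)

theorem eval_weightedEuler_initialForm_nonneg [l.NeBot] (h : HasLeadingTerm l f σ y q z)
    (hf : HasExponentIn f (Function.support σ)) (hd : NewtonD f q ≤ 0) {S : Set (Fin n → ℝ)}
    {ε : α → ℝ} (hy : ArePenalizedMinimizers l (fun u => eval (signedExp σ u) f) S ε y)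
    {v : Fin n → ℝ} (hv : ∀ᶠ k in l, ∀ᶠ t in 𝓝[>] (0 : ℝ), y k + t • -v ∈ S) :
    0 ≤ eval (signedExp σ z) (weightedEuler v (initialForm f q)) := by
  obtain ⟨s, hs, hconv⟩ := h.exists_rescaling hf
  have hlim := hconv _ (support_weightedEuler_subset v f)
  rw [facePoly_weightedEuler] at hlim
  have hpen : Tendsto (fun k => Real.exp (s k) * -(ε k * ‖-v‖)) l (𝓝 0) := by
    simpa using (hs.tendsto_exp hd).mul (hy.tendsto_zero.mul_const ‖-v‖).neg
  refine le_of_tendsto_of_tendsto hpen hlim ?_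
  filter_upwards [hv] with k hk
  exact mul_le_mul_of_nonneg_left (neg_mul_norm_le_of_isMinOn (hy.nonneg k) (hy.isMinOn k)
    (hasLineDerivAt_eval_signedExp σ (y k) v f) hk) (Real.exp_pos _).le

end HasLeadingTerm

end LeadingTerm

section Multipliers

variable {n : ℕ} {α ι : Type*} {l : Filter α} [l.NeBot] {σ q z : Fin n → ℝ}
  {y : α → Fin n → ℝ} {ε : α → ℝ}

/-- The points `x` with `fᵢ(x) ≤ 0` for all `i ≠ o`, where `o` is the index of the objective
function among the `fᵢ`. -/
def feasibleSet {τ : Type*} (f : ι → MvPolynomial τ ℝ) (o : ι) : Set (τ → ℝ) :=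
  {x | ∀ i, i ≠ o → eval x (f i) ≤ 0}

theorem isClosed_feasibleSet {τ : Type*} (f : ι → MvPolynomial τ ℝ) (o : ι) :
    IsClosed (feasibleSet f o) := by
  simp only [feasibleSet, ofPred_forall]
  exact isClosed_iInter fun i => isClosed_iInter fun _ =>
    isClosed_le (MvPolynomial.continuous_eval (f i)) continuous_const

theorem eval_weightedEuler_div {τ R : Type*} [Fintype τ] [Field R] {f : MvPolynomial τ R}
    {x : τ → R} (hx : ∀ j, x j = 0 → pderiv j f = 0) (v : τ → R) :
    eval x (weightedEuler (fun j => v j / x j) f) = (fun j => eval x (pderiv j f)) ⬝ᵥ v := by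
  rw [eval_weightedEuler]
  refine Finset.sum_congr rfl fun j _ => ?_
  by_cases hj : x j = 0
  · simp [hx j hj]
  · field_simp

variable {f : ι → MvPolynomial (Fin n) ℝ} {o : ι}

theorem exists_gradient_dotProduct_nonneg [Finite ι]
    (hy : ArePenalizedMinimizers l (fun u => eval (signedExp σ u) (f o))
      (signedExp σ ⁻¹' feasibleSet f o) ε y)
    (hlead : ∀ i, HasLeadingTerm l (f i) σ y q z) (ho : NotConstOn (f o) (Function.support σ))
    (hd : NewtonD (f o) q ≤ 0) (v : Fin n → ℝ) :
    ∃ i, (NotConstOn (f i) (Function.support σ) ∧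
      (i = o ∨ eval (signedExp σ z) (initialForm (f i) q) = 0)) ∧
        0 ≤ (fun j => eval (signedExp σ z) (pderiv j (initialForm (f i) q))) ⬝ᵥ v := by
  by_contra! hneg
  have hdesc : ∀ i, NotConstOn (f i) (Function.support σ) →
      (i = o ∨ eval (signedExp σ z) (initialForm (f i) q) = 0) → eval (signedExp σ z)
        (weightedEuler (fun j => v j / signedExp σ z j) (initialForm (f i) q)) < 0 := by
    intro i hi hact
    rw [eval_weightedEuler_div fun j hj => pderiv_facePoly_eq_zero
      ((hlead i).face_subset hi.hasExponentIn) (signedExp_eq_zero_iff.1 hj)]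
    exact hneg i ⟨hi, hact⟩
  refine (hdesc o ho (Or.inl rfl)).not_ge
    ((hlead o).eval_weightedEuler_initialForm_nonneg ho.hasExponentIn hd hy ?_)
  simp only [mem_preimage, feasibleSet, mem_ofPred_eq, eventually_all]
  exact fun i hi => (hlead i).eventually_eval_nonpos (fun k => hy.mem k i hi)
    fun hnc hzero => hdesc i hnc (Or.inr hzero)

theorem exists_multipliers [Fintype ι]
    (hy : ArePenalizedMinimizers l (fun u => eval (signedExp σ u) (f o))
      (signedExp σ ⁻¹' feasibleSet f o) ε y)
    (hlead : ∀ i, HasLeadingTerm l (f i) σ y q z) (ho : NotConstOn (f o) (Function.support σ))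
    (hd : NewtonD (f o) q ≤ 0) :
    ∃ w : ι → ℝ, 0 ≤ w ∧ w ≠ 0 ∧
      (∀ i, i ≠ o → w i * eval (signedExp σ z) (initialForm (f i) q) = 0) ∧
        ∀ j, ∑ i, w i * eval (signedExp σ z) (pderiv j (initialForm (f i) q)) = 0 := by
  obtain ⟨w, hw0, hw, hinactive, hsum⟩ := exists_sum_smul_eq_zero_of_forall_dotProduct_nonneg _
    {i | NotConstOn (f i) (Function.support σ) ∧
      (i = o ∨ eval (signedExp σ z) (initialForm (f i) q) = 0)}
    (exists_gradient_dotProduct_nonneg hy hlead ho hd)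
  refine ⟨w, hw0, hw, fun i hi => mul_eq_zero.2 (or_iff_not_imp_left.2 fun hwi => ?_), fun j => ?_⟩
  · exact (not_imp_comm.1 (hinactive i) hwi).2.resolve_left hi
  · simpa using congrFun hsum j

theorem MFinfty.newtonD_nonneg {p : ℕ} {f : Fin (p + 1) → MvPolynomial (Fin n) ℝ}
    (hMF : MFinfty f)
    (hy : ArePenalizedMinimizers l (fun u => eval (signedExp σ u) (f 0))
      (signedExp σ ⁻¹' feasibleSet f 0) ε y)
    (hlead : ∀ i, HasLeadingTerm l (f i) σ y q z) (h0 : NotConstOn (f 0) (Function.support σ))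
    {m : ℝ} (hlim : Tendsto (fun k => eval (signedExp σ (y k)) (f 0)) l (𝓝 m)) :
    0 ≤ NewtonD (f 0) q := by
  by_contra! hd
  obtain ⟨v, -, hv⟩ := hMF _ h0.nonempty q (signedExp σ z) hd
    (fun i hi => (hlead i).face_subset hi.hasExponentIn) (fun j => signedExp_eq_zero_iff)
    fun i hi => (hlead i).eval_initialForm_nonpos fun k => hy.mem k i hi
  obtain ⟨i, ⟨hi, hact⟩, hnonneg⟩ := exists_gradient_dotProduct_nonneg hy hlead h0 hd.le v
  refine (hv i hi ?_).not_ge hnonneg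
  rcases hact with rfl | hzero
  · rw [(hlead 0).eval_initialForm_eq h0.hasExponentIn hd.le hlim, if_neg hd.ne]
  · exact hzero

end Multipliers

/-- **Theorem 3.1 (Fritz-John optimality conditions at infinity).** -/
theorem fritz_john_at_infinity {n p : ℕ} (f : Fin (p + 1) → MvPolynomial (Fin n) ℝ)
    (hnc : ∀ i, ∃ x y : Fin n → ℝ, eval x (f i) ≠ eval y (f i))
    (S : Set (Fin n → ℝ))
    (hS : S = {x | ∀ i, i ≠ 0 → eval x (f i) ≤ 0})
    (hSne : S.Nonempty)
    (hbdd : BddBelow ((fun x => eval x (f 0)) '' S))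
    (fstar : ℝ) (hfstar : fstar = sInf ((fun x => eval x (f 0)) '' S))
    (hMF : MFinfty f)
    (hnotatt : ∀ x ∈ S, eval x (f 0) ≠ fstar) :
    fstar = 0 ∨
      ∃ (J : Set (Fin n)) (q xs : Fin n → ℝ) (lam : Fin (p + 1) → ℝ),
        J.Nonempty ∧
        (∃ j ∈ J, q j < 0) ∧
        -- (i)
        (∀ j, xs j = 0 ↔ j ∉ J) ∧
        -- (ii)
        (fstar = eval xs (facePoly (f 0) (NewtonFace (f 0) q)) ∧
          NewtonFace (f 0) q ⊆ RJ J ∧ NewtonD (f 0) q = 0) ∧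
        -- (iii)
        (∀ j : Fin n,
          ∑ i, lam i * eval xs (pderiv j (facePoly (f i) (NewtonFace (f i) q))) = 0) ∧
        -- (iv)
        (∀ i, i ≠ 0 → eval xs (facePoly (f i) (NewtonFace (f i) q)) ≤ 0 ∧
          lam i * eval xs (facePoly (f i) (NewtonFace (f i) q)) = 0) ∧
        -- (v)
        ((∀ i, 0 ≤ lam i) ∧ lam ≠ 0) := by
  subst hS
  have hglb : IsGLB ((fun x => eval x (f 0)) '' feasibleSet f 0) fstar :=
    hfstar ▸ isGLB_csInf (hSne.image _) hbdd
  have hcont := MvPolynomial.continuous_eval (f 0)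
  have hclosed := isClosed_feasibleSet f 0
  obtain ⟨σ, hσ⟩ := exists_isGLB_image_preimage_signedExp hglb
  obtain ⟨y, hy⟩ := exists_arePenalizedMinimizers (hclosed.preimage (continuous_signedExp σ))
    (hcont.comp (continuous_signedExp σ)).continuousOn hσ (fun _ : ℕ => Nat.one_div_pos_of_nat)
    (tendsto_one_div_add_atTop_nhds_zero_nat.mono_left Nat.hyperfilter_le_atTop)
  have hlim := hy.tendsto hσ
  obtain ⟨q, z, hcoord, hlead⟩ := exists_hasLeadingTerm (hyperfilter ℕ) f σ y
  have h0 := notConstOn_of_tendsto_of_forall_ne hy.mem hlim hnotatt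
  have hneg := exists_neg_of_tendsto_of_forall_ne hclosed hcont hy.mem hlim hnotatt hcoord
  rcases (hMF.newtonD_nonneg hy hlead h0 hlim).lt_or_eq with hd | hd
  · exact Or.inl ((hlead 0).limit_eq_zero_of_newtonD_pos h0.hasExponentIn hd hlim)
  · obtain ⟨lam, hlam0, hlam, hcompl, hgrad⟩ := exists_multipliers hy hlead h0 hd.ge
    have hvalue := (hlead 0).eval_initialForm_eq h0.hasExponentIn hd.ge hlim
    have hfeas := fun i hi => (hlead i).eval_initialForm_nonpos fun k => hy.mem k i hi
    exact Or.inr ⟨Function.support σ, q, signedExp σ z, lam, h0.nonempty, hneg,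
      fun j => signedExp_eq_zero_iff,
      ⟨(hvalue.trans (if_pos hd.symm)).symm, (hlead 0).face_subset h0.hasExponentIn, hd.symm⟩,
      hgrad, fun i hi => ⟨hfeas i hi, hcompl i hi⟩, hlam0, hlam⟩
end
end

section
/- Let f₀ : ℝⁿ → ℝ be a polynomial function. If f₀ is nondegenerate at infinity, then the unconstrained problem inf_{x ∈ ℝⁿ} f₀(x) (i.e., the case p = 0, S = ℝⁿ) has the Mangasarian–Fromovitz property at infinity ((MF)∞). -/
open MvPolynomial Set Filter
open scoped Classical

noncomputable section

/-- The (MF)∞ property for the unconstrained problem `inf_{x ∈ ℝⁿ} f₀(x)` (case `p = 0`). -/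
def MFinftyUnconstrained {n : ℕ} (f : MvPolynomial (Fin n) ℝ) : Prop :=
  ∀ J : Set (Fin n), J.Nonempty → ∀ q x : Fin n → ℝ,
    NewtonD f q < 0 →
    (NotConstOn f J → NewtonFace f q ⊆ RJ J) →
    (∀ j, x j = 0 ↔ j ∉ J) →
    NotConstOn f J →
    eval x (facePoly f (NewtonFace f q)) = 0 →
    ∃ v : Fin n → ℝ, v ≠ 0 ∧
      ∑ j, eval x (pderiv j (facePoly f (NewtonFace f q))) * v j < 0

/-! If `Δ ⊆ ℝ^J` then `f_Δ` involves only the variables `x_j` with `j ∈ J`, and so do its partial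
derivatives. Their values at a point of the torus of `ℝ^J` are therefore unchanged when the
coordinates outside `J` are replaced by `1`, which gives a point of `(ℝ ∖ {0})ⁿ`. There
nondegeneracy makes the gradient of `f_Δ` nonzero, so its negative is a descent direction. -/

section Supported

variable {σ R : Type*} [CommSemiring R] {s : Set σ}

lemma monomial_mem_supported {κ : σ →₀ ℕ} (hκ : (κ.support : Set σ) ⊆ s) (a : R) :
    monomial κ a ∈ supported R s := by
  rw [monomial_eq, ← algebraMap_eq]
  exact mul_mem (Subalgebra.algebraMap_mem _ a) <|
    prod_mem fun i hi ↦ pow_mem (Algebra.subset_adjoin <| mem_image_of_mem X (hκ hi)) _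

lemma pderiv_mem_supported {p : MvPolynomial σ R} (hp : p ∈ supported R s) (i : σ) :
    pderiv i p ∈ supported R s := by
  induction hp using Algebra.adjoin_induction with
  | mem _ h =>
    obtain ⟨j, -, rfl⟩ := h
    rw [pderiv_X]
    obtain rfl | hij := eq_or_ne i j
    · simpa only [Pi.single_eq_same] using one_mem _
    · simpa only [Pi.single_eq_of_ne hij.symm] using zero_mem _
  | algebraMap a => simpa only [algebraMap_eq, pderiv_C] using zero_mem _
  | add p q _ _ hp hq => simpa only [map_add] using add_mem hp hq
  | mul p q hp' hq' hp hq =>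
    rw [pderiv_mul]
    exact add_mem (mul_mem hp hq') (mul_mem hp' hq)

lemma eval_eq_of_mem_supported {p : MvPolynomial σ R} (hp : p ∈ supported R s) {x y : σ → R}
    (hxy : EqOn x y s) : eval x p = eval y p :=
  eval₂Hom_congr' rfl (fun _ hi _ ↦ hxy (mem_supported.mp hp hi)) rfl

end Supported

lemma exists_ne_zero_dotProduct_neg {ι R : Type*} [Fintype ι] [Ring R] [LinearOrder R]
    [IsStrictOrderedRing R] {g : ι → R} (hg : g ≠ 0) : ∃ v, v ≠ 0 ∧ g ⬝ᵥ v < 0 := by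
  refine ⟨-g, neg_ne_zero.mpr hg, ?_⟩
  rw [dotProduct_neg, neg_lt_zero]
  exact (Finset.sum_nonneg fun i _ ↦ mul_self_nonneg (g i)).lt_of_ne'
    (dotProduct_self_eq_zero.not.mpr hg)

section NewtonFace

variable {n : ℕ} {f : MvPolynomial (Fin n) ℝ} {J : Set (Fin n)}

lemma support_subset_of_expVec_mem_RJ {κ : Fin n →₀ ℕ} (hκ : expVec κ ∈ RJ J) :
    (κ.support : Set (Fin n)) ⊆ J := fun j hj ↦
  of_not_not fun hjJ ↦ Finsupp.mem_support_iff.mp hj (Nat.cast_eq_zero.mp (hκ j hjJ))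

lemma facePoly_mem_supported (f : MvPolynomial (Fin n) ℝ) {Δ : Set (Fin n → ℝ)} (hΔ : Δ ⊆ RJ J) :
    facePoly f Δ ∈ supported ℝ J :=
  sum_mem fun _ hκ ↦ monomial_mem_supported
    (support_subset_of_expVec_mem_RJ (hΔ (Finset.mem_filter.mp hκ).2)) _

lemma NondegenerateAtInfinity.exists_eval_pderiv_facePoly_ne_zero
    (hf : NondegenerateAtInfinity f) {q x : Fin n → ℝ} (hq : NewtonD f q < 0)
    (hface : NewtonFace f q ⊆ RJ J) (hx : ∀ j ∈ J, x j ≠ 0) :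
    ∃ j, eval x (pderiv j (facePoly f (NewtonFace f q))) ≠ 0 := by
  set y : Fin n → ℝ := J.piecewise x 1
  have hy (j) : y j ≠ 0 := by
    by_cases hj : j ∈ J
    · simpa only [y, piecewise_eq_of_mem _ _ _ hj] using hx j hj
    · simpa only [y, piecewise_eq_of_notMem _ _ _ hj, Pi.one_apply] using one_ne_zero
  obtain ⟨j, hj⟩ := not_forall.mp (hf q hq y hy)
  have hyx := eval_eq_of_mem_supported
    (pderiv_mem_supported (facePoly_mem_supported f hface) j) (piecewise_eqOn J x 1)
  exact ⟨j, hyx ▸ hj⟩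

end NewtonFace

theorem nondegenerate_imp_MFinfty_general {n : ℕ} {f₀ : MvPolynomial (Fin n) ℝ}
    (hnd : NondegenerateAtInfinity f₀) {J : Set (Fin n)} {q x : Fin n → ℝ}
    (hq : NewtonD f₀ q < 0) (hface : NewtonFace f₀ q ⊆ RJ J) (hx : ∀ j ∈ J, x j ≠ 0) :
    ∃ v : Fin n → ℝ, v ≠ 0 ∧
      ∑ j, eval x (pderiv j (facePoly f₀ (NewtonFace f₀ q))) * v j < 0 := by
  obtain ⟨j, hj⟩ := hnd.exists_eval_pderiv_facePoly_ne_zero hq hface hx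
  exact exists_ne_zero_dotProduct_neg (Function.ne_iff.mpr ⟨j, hj⟩)

/-- **Lemma 2.1, "⇒" direction.** -/
theorem nondegenerate_imp_MFinfty {n : ℕ} (f₀ : MvPolynomial (Fin n) ℝ)
    (hnd : NondegenerateAtInfinity f₀) : MFinftyUnconstrained f₀ := by
  intro J _ q x hq hface hx hconst _
  exact nondegenerate_imp_MFinfty_general hnd hq (hface hconst) fun j hj h ↦ (hx j).mp h hj
end
end
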